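/- arXiv:1905.06408 — 2 statements merged into one kernel-verified Lean document; each statement's English description precedes it below -/
import Mathlib

section
/- Prepared families are uniformly weakly mild: Let T ⊂ ℝ^k and let U ⊂ T × (0,1)^m be such that for every t ∈ T the fiber U_t = {x : (t,x) ∈ U} is open in (0,1)^m. Suppose f : U → ℝ can be written as f(t,x) = b_j(t,x)·F(b(t,x)), where b = (b_1,…,b_N) : U → ℝ^N is bounded, b_j is one of its component functions, each component has the form b_i(t,x) = a_i(t)·x^{μ_i} for some function a_i : ℝ^k → ℝ and μ_i ∈ ℝ^m, and F is real analytic on an open neighborhood of the topological closure of b(U). Then there exist A,B > 0 such that for every t ∈ T the function f_t : U_t → ℝ, f_t(x) = f(t,x), is weakly (A,B,0)-mild. -/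
/-!
The proof rescales each point to `(1, …, 1)`. Fix `x₀ ∈ U_t` and put `β = b(t, x₀)`. Since the
components of `b(t, ·)` are monomials, `b_i(t, x) = β_i (x / x₀)^{μ_i}` (coordinatewise quotient),
so near `x₀` the function `f_t` is `x ↦ H(β, x / x₀)`, where
`H(β, z) = β_j z^{μ_j} F(β_1 z^{μ_1}, …, β_N z^{μ_N})` (`scaledModel`) depends neither on `t` nor
on `x₀`.

`H` is analytic at `(β, 1)` for every `β` in the compact set `closure (b '' U)`, so the Taylor
coefficients of `H` at these points satisfy one geometric bound `‖p n‖ ≤ C R ^ n`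
(`uniform_series`). The `n`-th derivative is the symmetrization of the `n`-th coefficient, a sum of
`n!` terms, and the linear part of `x ↦ (β, x / x₀)` sends the `i`-th basis vector to a vector of
norm `1 / x₀ i`; this accounts for the factor `1 / x₀^ν` (`abs_iteratedFDerivWithin_le`). Hence
`A = R` and `B = C` work for all `t`.
-/


open Set

noncomputable section

/-- The list of coordinate directions (with multiplicities) associated to a
multi-index `ν ∈ ℕ^d`. -/
def mDirs {d : ℕ} (ν : Fin d → ℕ) : List (Fin d → ℝ) :=
  (List.finRange d).flatMap fun i => List.replicate (ν i) (Pi.single i 1)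

/-- The partial derivative `f^{(ν)}` of `f : ℝ^d → ℝ` (computed within the set `U`) at `x`,
realized as the iterated derivative of order `|ν|` in the coordinate directions given by `ν`. -/
def pderivW {d : ℕ} (U : Set (Fin d → ℝ)) (f : (Fin d → ℝ) → ℝ) (ν : Fin d → ℕ)
    (x : Fin d → ℝ) : ℝ :=
  iteratedFDerivWithin ℝ (∑ i, ν i) f U x (fun j => (mDirs ν).getD (j : ℕ) 0)

/-- `f` is `(A,B,C)`-mild up to order `r` on `U`. -/
def MildUpTo {d : ℕ} (r : ℕ∞) (U : Set (Fin d → ℝ)) (f : (Fin d → ℝ) → ℝ)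
    (A B C : ℝ) : Prop :=
  ContDiffOn ℝ r f U ∧ ∀ ν : Fin d → ℕ, (∑ i, ν i : ℕ∞) ≤ r → ∀ x ∈ U,
    |pderivW U f ν x| ≤ B ^ (C + 1) * A ^ (∑ i, ν i) * (Nat.factorial (∑ i, ν i) : ℝ) ^ (C + 1)

/-- `f` is `(A,B,C)`-mild on `U`. -/
def Mild {d : ℕ} (U : Set (Fin d → ℝ)) (f : (Fin d → ℝ) → ℝ) (A B C : ℝ) : Prop :=
  MildUpTo ⊤ U f A B C

/-- `f` is weakly `(A,B,C)`-mild up to order `r` on `U ⊆ (0,1)^d`. -/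
def WeaklyMildUpTo {d : ℕ} (r : ℕ∞) (U : Set (Fin d → ℝ)) (f : (Fin d → ℝ) → ℝ)
    (A B C : ℝ) : Prop :=
  ContDiffOn ℝ r f U ∧ ∀ ν : Fin d → ℕ, (∑ i, ν i : ℕ∞) ≤ r → ∀ x ∈ U,
    |pderivW U f ν x| ≤
      B ^ (C + 1) * A ^ (∑ i, ν i) * (Nat.factorial (∑ i, ν i) : ℝ) ^ (C + 1) /
        ∏ i, (x i) ^ (ν i)

/-- `f` is weakly `(A,B,C)`-mild on `U`. -/
def WeaklyMild {d : ℕ} (U : Set (Fin d → ℝ)) (f : (Fin d → ℝ) → ℝ) (A B C : ℝ) : Prop :=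
  WeaklyMildUpTo ⊤ U f A B C

/-- `f` is a Gevrey function of class `α` on `U`. -/
def Gevrey {d : ℕ} (U : Set (Fin d → ℝ)) (f : (Fin d → ℝ) → ℝ) (α : ℝ) : Prop :=
  ContDiffOn ℝ (⊤ : ℕ∞) f U ∧ ∃ M R : ℝ, 0 < M ∧ 0 < R ∧ ∀ ν : Fin d → ℕ, ∀ x ∈ U,
    |pderivW U f ν x| ≤ (M * (Nat.factorial (∑ i, ν i) : ℝ) / R ^ (∑ i, ν i)) ^ α

open scoped ENNReal NNReal Topology

/-- Near a point of analyticity the Taylor coefficients obey a common geometric bound: those at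
`z₀ + y` are given by `changeOrigin`, whose norms, weighted by `r ^ n`, are all dominated by a single
convergent double series as long as `‖y‖ < r` and `2 * r` is less than the radius at `z₀`. -/
theorem locally_uniform_series {E : Type*} [NormedAddCommGroup E] [NormedSpace ℝ E]
    {H : E → ℝ} {z₀ : E} (hH : AnalyticAt ℝ H z₀) :
    ∃ C R : ℝ, 0 < C ∧ 0 < R ∧ ∀ᶠ z in 𝓝 z₀,
      ∃ p : FormalMultilinearSeries ℝ E ℝ, HasFPowerSeriesAt H p z ∧
        ∀ n, ‖p n‖ ≤ C * R ^ n := by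
  obtain ⟨p, ρ, hp⟩ := hH
  obtain ⟨s, hs0, hs⟩ := ENNReal.lt_iff_exists_nnreal_btwn.1 hp.r_pos
  have hs0' : 0 < s := by exact_mod_cast hs0
  set r : ℝ≥0 := s / 2 with hr
  have hr0 : 0 < r := by positivity
  have hrr : (r + r : ℝ≥0∞) < p.radius := by
    refine lt_of_lt_of_le ?_ hp.r_le
    have : (r + r : ℝ≥0∞) = s := by
      rw [← ENNReal.coe_add, hr, add_halves]
    rwa [this]
  have hsum := p.changeOriginSeries_summable_aux₁ hrr
  set S := ∑' s : Σ k l : ℕ, { s : Finset (Fin (k + l)) // s.card = l },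
    ‖p (s.1 + s.2.1)‖₊ * r ^ s.2.1 * r ^ s.1 with hS
  refine ⟨S + 1, (r : ℝ)⁻¹, by positivity, by positivity, ?_⟩
  filter_upwards [Metric.ball_mem_nhds z₀ (show (0 : ℝ) < r from hr0)] with z hz
  set y := z - z₀
  have hy : ‖y‖₊ < r := by
    rw [← NNReal.coe_lt_coe]
    simpa [y, dist_eq_norm] using hz
  have hyρ : (‖y‖₊ : ℝ≥0∞) < ρ := by
    refine lt_trans (b := (r : ℝ≥0∞)) (by exact_mod_cast hy) (lt_of_le_of_lt ?_ hs)
    exact_mod_cast half_le_self (zero_le (a := s))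
  refine ⟨p.changeOrigin y, ?_, fun n => ?_⟩
  · have := (hp.changeOrigin hyρ).hasFPowerSeriesAt
    simpa [y] using this
  · have h1 := p.nnnorm_changeOrigin_le n (hyρ.trans_le hp.r_le)
    have hfib := (NNReal.summable_sigma.1 hsum).1 n
    have h2 : ‖p.changeOrigin y n‖₊ * r ^ n ≤ S := by
      calc ‖p.changeOrigin y n‖₊ * r ^ n
          ≤ (∑' s : Σ l : ℕ, { s : Finset (Fin (n + l)) // s.card = l },
              ‖p (n + s.1)‖₊ * ‖y‖₊ ^ s.1) * r ^ n := by gcongr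
        _ = ∑' s : Σ l : ℕ, { s : Finset (Fin (n + l)) // s.card = l },
              ‖p (n + s.1)‖₊ * ‖y‖₊ ^ s.1 * r ^ n := NNReal.tsum_mul_right _ _ |>.symm
        _ ≤ ∑' s : Σ l : ℕ, { s : Finset (Fin (n + l)) // s.card = l },
              ‖p (n + s.1)‖₊ * r ^ s.1 * r ^ n := by
            have hle : ∀ s : Σ l : ℕ, { s : Finset (Fin (n + l)) // s.card = l },
                ‖p (n + s.1)‖₊ * ‖y‖₊ ^ s.1 * r ^ n ≤ ‖p (n + s.1)‖₊ * r ^ s.1 * r ^ n := by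
              intro s; gcongr
            exact (NNReal.summable_of_le hle hfib).tsum_le_tsum hle hfib
        _ ≤ S := by
            rw [hS, hsum.tsum_sigma' (NNReal.summable_sigma.1 hsum).1]
            exact (NNReal.summable_sigma.1 hsum).2.le_tsum n (fun _ _ => zero_le)
    have h3 : ‖p.changeOrigin y n‖ * (r : ℝ) ^ n ≤ S := by exact_mod_cast h2
    have hrn : (0 : ℝ) < (r : ℝ) ^ n := by positivity
    rw [inv_pow, ← div_eq_mul_inv, le_div_iff₀ hrn]
    linarith

theorem uniform_series {E : Type*} [NormedAddCommGroup E] [NormedSpace ℝ E]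
    {H : E → ℝ} {K : Set E} (hK : IsCompact K) (hH : ∀ z ∈ K, AnalyticAt ℝ H z) :
    ∃ C R : ℝ, 0 < C ∧ 0 < R ∧ ∀ z ∈ K,
      ∃ p : FormalMultilinearSeries ℝ E ℝ, HasFPowerSeriesAt H p z ∧
        ∀ n, ‖p n‖ ≤ C * R ^ n := by
  refine hK.induction_on (p := fun s => ∃ C R : ℝ, 0 < C ∧ 0 < R ∧ ∀ z ∈ s,
      ∃ p : FormalMultilinearSeries ℝ E ℝ, HasFPowerSeriesAt H p z ∧
        ∀ n, ‖p n‖ ≤ C * R ^ n) ⟨1, 1, one_pos, one_pos, by simp⟩ ?_ ?_ ?_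
  · rintro s t hst ⟨C, R, hC, hR, h⟩
    exact ⟨C, R, hC, hR, fun z hz => h z (hst hz)⟩
  · rintro s t ⟨C, R, hC, hR, h⟩ ⟨C', R', hC', hR', h'⟩
    refine ⟨max C C', max R R', lt_max_of_lt_left hC, lt_max_of_lt_left hR, ?_⟩
    rintro z (hz | hz)
    · obtain ⟨p, hp, hb⟩ := h z hz
      refine ⟨p, hp, fun n => (hb n).trans ?_⟩
      gcongr <;> exact le_max_left _ _
    · obtain ⟨p, hp, hb⟩ := h' z hz
      refine ⟨p, hp, fun n => (hb n).trans ?_⟩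
      gcongr <;> exact le_max_right _ _
  · intro z hz
    obtain ⟨C, R, hC, hR, h⟩ := locally_uniform_series (hH z hz)
    exact ⟨_, mem_nhdsWithin_of_mem_nhds h, C, R, hC, hR, fun z hz => hz⟩

theorem prod_getD {α : Type*} (g : α → ℝ) (d : α) (l : List α) {n : ℕ} (hn : l.length = n) :
    ∏ q : Fin n, g (l.getD (q : ℕ) d) = (l.map g).prod := by
  subst hn
  rw [← Fin.prod_univ_getElem]
  refine Fintype.prod_equiv (finCongr (by simp)) _ _ fun q => ?_
  simp

theorem length_mDirs {d : ℕ} (ν : Fin d → ℕ) : (mDirs ν).length = ∑ i, ν i := by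
  simp [mDirs, List.length_flatMap, Fin.sum_univ_def]

/-- A product over the slots of `mDirs ν` groups into powers, one for each coordinate. -/
theorem prod_mDirs {d : ℕ} (ν : Fin d → ℕ) (g : (Fin d → ℝ) → ℝ) :
    ∏ q : Fin (∑ i, ν i), g ((mDirs ν).getD (q : ℕ) 0) = ∏ i, g (Pi.single i 1) ^ ν i := by
  rw [prod_getD g 0 _ (length_mDirs ν), mDirs, Fin.prod_univ_def]
  generalize List.finRange d = l
  induction l with
  | nil => simp
  | cons i l ih => simp [List.flatMap_cons, ih]

/-- The function `H(β, z) = β_j z^{μ_j} F(β_1 z^{μ_1}, …, β_N z^{μ_N})` of `q = (β, z)`. Every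
`f_t` coincides near `x₀ ∈ U_t` with `x ↦ H(b(t, x₀), x / x₀)`. -/
def scaledModel {m N : ℕ} (F : (Fin N → ℝ) → ℝ) (μ : Fin N → Fin m → ℝ) (j : Fin N)
    (q : (Fin N → ℝ) × (Fin m → ℝ)) : ℝ :=
  (q.1 j * ∏ l, q.2 l ^ μ j l) * F (fun i => q.1 i * ∏ l, q.2 l ^ μ i l)

theorem analyticAt_monomial {m N : ℕ} (c : Fin m → ℝ) (i : Fin N)
    {q : (Fin N → ℝ) × (Fin m → ℝ)} (hq : ∀ l, 0 < q.2 l) :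
    AnalyticAt ℝ (fun q : (Fin N → ℝ) × (Fin m → ℝ) => q.1 i * ∏ l, q.2 l ^ c l) q := by
  have h1 : AnalyticAt ℝ (fun q : (Fin N → ℝ) × (Fin m → ℝ) => q.1 i) q :=
    ((ContinuousLinearMap.proj (R := ℝ) (φ := fun _ : Fin N => ℝ) i).comp
      (ContinuousLinearMap.fst ℝ (Fin N → ℝ) (Fin m → ℝ))).analyticAt q
  refine h1.mul (Finset.analyticAt_fun_prod _ fun l _ => ?_)
  have h2 : AnalyticAt ℝ (fun q : (Fin N → ℝ) × (Fin m → ℝ) => q.2 l) q :=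
    ((ContinuousLinearMap.proj (R := ℝ) (φ := fun _ : Fin m => ℝ) l).comp
      (ContinuousLinearMap.snd ℝ (Fin N → ℝ) (Fin m → ℝ))).analyticAt q
  have h3 : AnalyticAt ℝ (fun q : (Fin N → ℝ) × (Fin m → ℝ) =>
      Real.exp (Real.log (q.2 l) * c l)) q :=
    ((AnalyticAt.comp (g := Real.log) (f := fun q : (Fin N → ℝ) × (Fin m → ℝ) => q.2 l)
      (analyticAt_log (hq l)) h2).mul analyticAt_const).rexp
  refine h3.congr ?_
  filter_upwards [h2.continuousAt.eventually (lt_mem_nhds (hq l))] with z hz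
  exact (Real.rpow_def_of_pos hz _).symm

theorem analyticAt_scaledModel {m N : ℕ} {F : (Fin N → ℝ) → ℝ} (μ : Fin N → Fin m → ℝ)
    (j : Fin N) {β : Fin N → ℝ} (hF : AnalyticAt ℝ F β) :
    AnalyticAt ℝ (scaledModel F μ j) (β, fun _ => 1) := by
  refine (analyticAt_monomial (μ j) j (by simp)).mul ?_
  refine AnalyticAt.comp (g := F)
    (f := fun q : (Fin N → ℝ) × (Fin m → ℝ) => fun i => q.1 i * ∏ l, q.2 l ^ μ i l) ?_ ?_
  · simpa using hF
  · exact AnalyticAt.pi fun i => analyticAt_monomial (μ i) i (by simp)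

/-- The linear part `x ↦ (0, x / x₀)` of the affine map `x ↦ (β, x / x₀)`. -/
def scaleMap {m : ℕ} (N : ℕ) (x₀ : Fin m → ℝ) : (Fin m → ℝ) →L[ℝ] (Fin N → ℝ) × (Fin m → ℝ) :=
  (ContinuousLinearMap.inr ℝ (Fin N → ℝ) (Fin m → ℝ)).comp
    (ContinuousLinearMap.pi fun l => (x₀ l)⁻¹ • ContinuousLinearMap.proj l)

theorem scaleMap_apply {m N : ℕ} (x₀ x : Fin m → ℝ) :
    scaleMap N x₀ x = (0, fun l => (x₀ l)⁻¹ * x l) := by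
  simp [scaleMap]

theorem norm_scaleMap_single {m N : ℕ} (x₀ : Fin m → ℝ) (i : Fin m) :
    ‖scaleMap N x₀ (Pi.single i 1)‖ = |x₀ i|⁻¹ := by
  have : (fun l => (x₀ l)⁻¹ * (Pi.single i 1 : Fin m → ℝ) l) = Pi.single i ((x₀ i)⁻¹) := by
    ext l
    by_cases h : l = i
    · subst h; simp
    · simp [h]
  rw [scaleMap_apply, this, Prod.norm_def]
  simp [Pi.norm_single]

/-- The iterated derivative symmetrizes the Taylor coefficient over the `n!` permutations of its
arguments. The vectors `L (v q)` are kept separate, instead of using `‖L‖ ^ n`, so that each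
coordinate direction contributes its own factor. -/
theorem abs_iteratedFDerivWithin_le {E G : Type*} [NormedAddCommGroup E] [NormedSpace ℝ E]
    [NormedAddCommGroup G] [NormedSpace ℝ G] {V : Set E} (hV : IsOpen V) {g : E → ℝ}
    {x : E} (hx : x ∈ V) {p : FormalMultilinearSeries ℝ G ℝ} {L : E →L[ℝ] G}
    (hg : HasFPowerSeriesAt g (p.compContinuousLinearMap L) x) {n : ℕ} (v : Fin n → E) :
    |iteratedFDerivWithin ℝ n g V x v| ≤ n.factorial * (‖p n‖ * ∏ q, ‖L (v q)‖) := by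
  obtain ⟨r, hr⟩ := hg
  rw [iteratedFDerivWithin_of_isOpen n hV hx, hr.iteratedFDeriv_eq_sum_of_completeSpace]
  refine (Finset.abs_sum_le_sum_abs _ _).trans ?_
  refine (Finset.sum_le_card_nsmul _ _ (‖p n‖ * ∏ q, ‖L (v q)‖) fun σ _ => ?_).trans ?_
  · rw [FormalMultilinearSeries.compContinuousLinearMap_apply, ← Real.norm_eq_abs]
    refine ((p n).le_opNorm _).trans_eq ?_
    congr 1
    exact Equiv.prod_comp σ fun q => ‖L (v q)‖
  · simp [Fintype.card_perm]

/-- a family prepared in `x` (i.e. `f(t,x) = b_j(t,x)·F(b(t,x))` with `b` a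
bounded map whose components are monomials `a_i(t)·x^{μ_i}` and `F` analytic and
non-vanishing near the closure of the range of `b`) is uniformly weakly `(A,B,0)`-mild. -/
theorem prepared_weaklyMild {k m N : ℕ} (T : Set (Fin k → ℝ))
    (U : Set ((Fin k → ℝ) × (Fin m → ℝ)))
    (hUsub : ∀ p ∈ U, p.1 ∈ T ∧ ∀ i, p.2 i ∈ Ioo (0 : ℝ) 1)
    (hUt : ∀ t ∈ T, IsOpen {x : Fin m → ℝ | (t, x) ∈ U})
    (f : (Fin k → ℝ) × (Fin m → ℝ) → ℝ)
    (b : (Fin k → ℝ) × (Fin m → ℝ) → Fin N → ℝ) (j : Fin N)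
    (a : Fin N → (Fin k → ℝ) → ℝ) (μ : Fin N → Fin m → ℝ)
    (hbform : ∀ p ∈ U, ∀ i, b p i = a i p.1 * ∏ l, p.2 l ^ μ i l)
    (hbbd : Bornology.IsBounded (b '' U))
    (F : (Fin N → ℝ) → ℝ) (W : Set (Fin N → ℝ)) (hW : IsOpen W)
    (hWb : closure (b '' U) ⊆ W) (hF : AnalyticOnNhd ℝ F W)
    (hfform : ∀ p ∈ U, f p = b p j * F (b p)) :
    ∃ A B : ℝ, 0 < A ∧ 0 < B ∧ ∀ t ∈ T,
      WeaklyMild {x : Fin m → ℝ | (t, x) ∈ U} (fun x => f (t, x)) A B 0 := by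
  have hK : IsCompact (closure (b '' U)) := hbbd.isCompact_closure
  obtain ⟨C, R, hC, hR, hser⟩ := uniform_series (H := scaledModel F μ j)
    (hK.prod (isCompact_singleton (x := (fun _ => 1 : Fin m → ℝ)))) (by
      rintro ⟨β, z⟩ ⟨hβ, hz⟩
      obtain rfl : z = fun _ => 1 := hz
      exact analyticAt_scaledModel μ j (hF β (hWb hβ)))
  refine ⟨R, C, hR, hC, fun t ht => ?_⟩
  have hV := hUt t ht
  have key : ∀ x₀ : Fin m → ℝ, (t, x₀) ∈ U → ∃ p : FormalMultilinearSeries ℝ _ ℝ,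
      HasFPowerSeriesAt (fun x => f (t, x)) (p.compContinuousLinearMap (scaleMap N x₀)) x₀ ∧
        ∀ n, ‖p n‖ ≤ C * R ^ n := by
    intro x₀ hx₀
    have hpos : ∀ l, 0 < x₀ l := fun l => ((hUsub _ hx₀).2 l).1
    obtain ⟨p, hp, hb⟩ := hser (b (t, x₀), fun _ => 1)
      ⟨subset_closure (mem_image_of_mem b hx₀), rfl⟩
    refine ⟨p, ?_, hb⟩
    -- Translating the argument of `H` by `(β, 0)` turns the affine substitution into a linear one.
    have h1 := hp.comp_sub (-b (t, x₀), 0)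
    have h2 : (b (t, x₀), fun _ => 1) + (-b (t, x₀), (0 : Fin m → ℝ)) = scaleMap N x₀ x₀ := by
      rw [scaleMap_apply]
      ext l
      · simp
      · simp [(hpos l).ne']
    rw [h2] at h1
    refine h1.compContinuousLinearMap.congr ?_
    filter_upwards [hV.mem_nhds hx₀] with x hx
    have hx' : (t, x) ∈ U := hx
    have hxpos : ∀ l, 0 < x l := fun l => ((hUsub _ hx').2 l).1
    have hbx : ∀ i, b (t, x₀) i * ∏ l, ((x₀ l)⁻¹ * x l) ^ μ i l = b (t, x) i := by
      intro i
      rw [hbform _ hx₀, hbform _ hx', mul_assoc, ← Finset.prod_mul_distrib]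
      congr 1
      refine Finset.prod_congr rfl fun l _ => ?_
      rw [← Real.mul_rpow (hpos l).le (by have := hpos l; have := hxpos l; positivity),
        mul_inv_cancel_left₀ (hpos l).ne']
    simp [scaleMap_apply, scaledModel, hbx, hfform _ hx']
  refine ⟨fun x hx => ?_, fun ν _ x hx => ?_⟩
  · obtain ⟨p, hp, -⟩ := key x hx
    exact hp.analyticAt.contDiffAt.contDiffWithinAt
  · obtain ⟨p, hp, hb⟩ := key x hx
    have hpos : ∀ l, 0 < x l := fun l => ((hUsub _ hx).2 l).1
    refine (abs_iteratedFDerivWithin_le hV hx hp _).trans ?_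
    rw [prod_mDirs ν fun w => ‖scaleMap N x w‖]
    simp only [norm_scaleMap_single, abs_of_pos (hpos _), inv_pow, Finset.prod_inv_distrib,
      zero_add, Real.rpow_one]
    rw [div_eq_mul_inv]
    have hinv : 0 ≤ (∏ i, x i ^ ν i)⁻¹ := inv_nonneg.2 (Finset.prod_nonneg fun i _ =>
      pow_nonneg (hpos i).le _)
    calc _ ≤ ((∑ i, ν i).factorial : ℝ) * (C * R ^ (∑ i, ν i) * (∏ i, x i ^ ν i)⁻¹) := by
          gcongr
          exact hb _
      _ = _ := by ring
end
end

section
/- Root functions away from 0 and ∞ are mild: Let S > 1 be a real number and p ≥ 1 an integer. Then the function f : (1/S, S) → ℝ, f(x) = x^{1/p}, is (S,S,0)-mild; that is, for every k ∈ ℕ and every x ∈ (1/S, S), |f^{(k)}(x)| ≤ S · S^k · k!. -/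
open Set

/-!
With `r = 1 / p ∈ [0, 1]`, the `k`-th derivative of `x ^ r` at `x > 0` is
`r (r - 1) ⋯ (r - k + 1) * x ^ r * x⁻¹ ^ k`. Each factor satisfies `|r - i| ≤ i + 1`, so the
falling factorial is at most `k!` in absolute value, while `1 / S < x < S` gives
`x ^ r ≤ S ^ r ≤ S` and `x⁻¹ ≤ S`.
-/

lemma abs_descPochhammer_eval_le_factorial {r : ℝ} (h0 : 0 ≤ r) (h1 : r ≤ 1) (k : ℕ) :
    |(descPochhammer ℝ k).eval r| ≤ (Nat.factorial k : ℝ) := by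
  rw [descPochhammer_eval_eq_prod_range, Finset.abs_prod,
    ← Finset.prod_range_add_one_eq_factorial]
  push_cast
  refine Finset.prod_le_prod (fun i _ => abs_nonneg _) fun i _ => ?_
  have hi : (0 : ℝ) ≤ i := i.cast_nonneg
  rw [abs_le]
  constructor <;> linarith

/-- for `S > 1` and an integer `p ≥ 1`, the root function `x ↦ x^{1/p}` is
`(S,S,0)`-mild on `(1/S, S)`: it is `C^∞` there and `|f^{(k)}(x)| ≤ S·S^k·k!` for all `k`. -/
theorem root_mild (S : ℝ) (hS : 1 < S) (p : ℕ) (hp : 1 ≤ p) :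
    ContDiffOn ℝ (⊤ : ℕ∞) (fun x : ℝ => x ^ ((1 : ℝ) / p)) (Ioo (1 / S) S) ∧
    ∀ k : ℕ, ∀ x ∈ Ioo (1 / S) S,
      |iteratedDerivWithin k (fun x : ℝ => x ^ ((1 : ℝ) / p)) (Ioo (1 / S) S) x| ≤
        S * S ^ k * (Nat.factorial k : ℝ) := by
  have hS0 : 0 < S := by linarith
  have hpos : ∀ x ∈ Ioo (1 / S) S, 0 < x := fun x hx => (by positivity : 0 < 1 / S).trans hx.1
  have hr0 : (0 : ℝ) ≤ 1 / p := by positivity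
  have hr1 : (1 : ℝ) / p ≤ 1 := by
    have : (1 : ℝ) ≤ p := by exact_mod_cast hp
    rw [div_le_one (by linarith)]
    exact this
  refine ⟨fun x hx => (Real.contDiffAt_rpow_const_of_ne (hpos x hx).ne').contDiffWithinAt, ?_⟩
  intro k x hx
  have hx0 := hpos x hx
  rw [iteratedDerivWithin_of_isOpen isOpen_Ioo hx, iteratedDeriv_eq_iterate,
    Real.iter_deriv_rpow_const, abs_mul, Real.rpow_sub_natCast hx0.ne', div_eq_mul_inv _ (x ^ k),
    ← inv_pow, abs_of_nonneg (by positivity : 0 ≤ x ^ ((1 : ℝ) / p) * x⁻¹ ^ k), mul_comm]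
  have hroot : x ^ ((1 : ℝ) / p) ≤ S :=
    calc x ^ ((1 : ℝ) / p) ≤ S ^ ((1 : ℝ) / p) := Real.rpow_le_rpow hx0.le hx.2.le hr0
      _ ≤ S ^ (1 : ℝ) := Real.rpow_le_rpow_of_exponent_le hS.le hr1
      _ = S := Real.rpow_one S
  have hinv : x⁻¹ ≤ S := inv_le_of_inv_le₀ hS0 (by simpa using hx.1.le)
  have hfact := abs_descPochhammer_eval_le_factorial hr0 hr1 k
  gcongr
end
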